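/- Let C be a finite pure d-dimensional strongly connected simplicial complex on vertex set V, let v be a new vertex not in V, and define C' to be the simplicial complex whose faces are: the faces of C, the sets σ∪{v} for σ a face of C (together with {v}), and all subsets of V. Define Σ'C to be the (d+1)-skeleton of C'. Then: (i) Σ'C is pure (d+1)-dimensional and strongly connected; (ii) if l ≤ d and C contains every subset of V of size at most l+1 (complete l-skeleton), then Σ'C contains every subset of V∪{v} of size at most l+2 (complete (l+1)-skeleton); in particular, if d ≥ 1 then Σ'C contains every subset of V∪{v} of size at most 2 (complete 1-skeleton). -/

import Mathlib

/-!
Write `v = none` for the apex. A face of `C'` is either an arbitrary subset of `V` or the cone over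
a face of `C`, so completeness only has to be checked on cones.

Purity: a cone over a face of `C` lies in the cone over a `d`-face. A subset of `V` lies in a
`(d+2)`-subset of `V` if there is one; otherwise `V` itself is a `d`-face of `C`, whose cone
contains everything.

Strong connectivity: fix a `d`-face `σ₀` of `C`. Coning carries chains of adjacent `d`-faces to
chains of adjacent `(d+1)`-faces, so every cone is joined to the cone over `σ₀`. The
`(d+2)`-subsets of `V` are joined to each other by exchanging one vertex at a time, and one that
contains `σ₀` is adjacent to the cone over `σ₀`.
-/

open Finset MeasureTheory
open scoped ENNReal

/-- A finite abstract simplicial complex on vertex type `V`. -/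
structure SComplex (V : Type) where
  faces : Finset (Finset V)
  down_closed : ∀ ⦃s⦄, s ∈ faces → ∀ ⦃t : Finset V⦄, t ⊆ s → t ∈ faces

/-- Simplicial coboundary of a cochain. -/
def delta {V : Type} [LinearOrder V] {R : Type} [CommRing R]
    (a : Finset V → R) : Finset V → R :=
  fun s => ∑ v ∈ s, (-1 : R) ^ (s.filter (fun w => w < v)).card * a (s.erase v)

def IsCocycle {V : Type} [LinearOrder V] (X : SComplex V) (R : Type) [CommRing R]
    (k : ℕ) (a : Finset V → R) : Prop :=
  ∀ s ∈ X.faces, s.card = k + 2 → delta a s = 0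

def IsCoboundary {V : Type} [LinearOrder V] (X : SComplex V) (R : Type) [CommRing R]
    (k : ℕ) (a : Finset V → R) : Prop :=
  ∃ f : Finset V → R, ∀ s ∈ X.faces, s.card = k + 1 → a s = delta f s

/-- The simplicial cup product of a `k`-cochain and an `l`-cochain. -/
def cup {V : Type} [LinearOrder V] {R : Type} [CommRing R] (k l : ℕ)
    (a b : Finset V → R) : Finset V → R :=
  fun s => a ((s.sort (· ≤ ·)).take (k + 1)).toFinset *
    b ((s.sort (· ≤ ·)).drop k).toFinset

/-- Bernoulli measure on `Bool` with success probability `p`. -/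
noncomputable def bernoulliMeasure (p : ℝ≥0∞) : Measure Bool :=
  p • Measure.dirac true + (1 - p) • Measure.dirac false

/-- Each subset `s` with `|s| = i+1` is selected independently with probability `p i`. -/
noncomputable def selectionMeasure (n : ℕ) (p : ℕ → ℝ≥0∞) :
    Measure (Finset (Fin n) → Bool) :=
  Measure.pi fun s => bernoulliMeasure (p (s.card - 1))

/-- The lower multiparametric model: maximal complex contained in the selected hypergraph. -/
def lowerComplex (n : ℕ) (ω : Finset (Fin n) → Bool) : SComplex (Fin n) where
  faces := Finset.univ.filter fun s => ∀ t ⊆ s, 2 ≤ t.card → ω t = true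
  down_closed := by
    intro s hs t hts
    simp only [Finset.mem_filter, Finset.mem_univ, true_and] at hs ⊢
    exact fun u hu hc => hs u (hu.trans hts) hc

/-- The upper multiparametric model: minimal complex containing the selected hypergraph. -/
def upperComplex (n : ℕ) (ω : Finset (Fin n) → Bool) : SComplex (Fin n) where
  faces := Finset.univ.filter fun s =>
    s.card ≤ 1 ∨ ∃ t, s ⊆ t ∧ 2 ≤ t.card ∧ ω t = true
  down_closed := by
    intro s hs t hts
    simp only [Finset.mem_filter, Finset.mem_univ, true_and] at hs ⊢
    rcases hs with h | ⟨u, hsu, hc, hω⟩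
    · exact Or.inl (le_trans (Finset.card_le_card hts) h)
    · exact Or.inr ⟨u, hts.trans hsu, hc, hω⟩

/-- Selection probabilities of the lower model: `p i = n ^ (-α i)`. -/
noncomputable def lowerP (α : ℕ → ℝ) (n : ℕ) : ℕ → ℝ≥0∞ :=
  fun i => ENNReal.ofReal ((n : ℝ) ^ (-(α i)))

/-- Selection probabilities of the upper model with `D` parameters. -/
noncomputable def upperP (D : ℕ) (α : ℕ → ℝ) (n : ℕ) : ℕ → ℝ≥0∞ :=
  fun i => if i ≤ D then ENNReal.ofReal ((n : ℝ) ^ (-(α i))) else 0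

def S1 (α : ℕ → ℝ) (k : ℕ) : ℝ :=
  ∑ i ∈ Finset.Icc 1 (k + 1), ((k + 1).choose i : ℝ) * α i

def S2 (α : ℕ → ℝ) (k : ℕ) : ℝ :=
  ∑ i ∈ Finset.Icc 1 k, ((k + 2).choose (i + 1) : ℝ) * α i

/-- The `d`-dimensional faces of a complex. -/
def dimFaces {V : Type} [DecidableEq V] (X : SComplex V) (d : ℕ) : Finset (Finset V) :=
  X.faces.filter fun s => s.card = d + 1

/-- Adjacency of `d`-faces: sharing a `(d-1)`-dimensional face. -/
def AdjRel {V : Type} [DecidableEq V] (X : SComplex V) (d : ℕ) (σ τ : Finset V) : Prop :=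
  σ ∈ dimFaces X d ∧ τ ∈ dimFaces X d ∧ d ≤ (σ ∩ τ).card

def IsPure {V : Type} [DecidableEq V] (X : SComplex V) (d : ℕ) : Prop :=
  ∀ s ∈ X.faces, ∃ t ∈ X.faces, s ⊆ t ∧ t.card = d + 1

def StronglyConnected {V : Type} [DecidableEq V] (X : SComplex V) (d : ℕ) : Prop :=
  (dimFaces X d).Nonempty ∧
    ∀ σ ∈ dimFaces X d, ∀ τ ∈ dimFaces X d, Relation.ReflTransGen (AdjRel X d) σ τ

open scoped Classical in
/-- The strong connectivity component of the `d`-face `σ0`. -/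
noncomputable def component {V : Type} [DecidableEq V] (X : SComplex V) (d : ℕ)
    (σ0 : Finset V) : SComplex V where
  faces := (X.faces.filter fun τ =>
      τ.card = d + 1 ∧ Relation.ReflTransGen (AdjRel X d) σ0 τ).biUnion Finset.powerset
  down_closed := by
    intro s hs t hts
    simp only [Finset.mem_biUnion, Finset.mem_powerset] at hs ⊢
    obtain ⟨u, hu, hsu⟩ := hs
    exact ⟨u, hu, hts.trans hsu⟩

/-- The `d`-skeleton of a complex. -/
def skeleton {V : Type} [DecidableEq V] (X : SComplex V) (d : ℕ) : SComplex V where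
  faces := X.faces.filter fun s => s.card ≤ d + 1
  down_closed := by
    intro s hs t hts
    simp only [Finset.mem_filter] at hs ⊢
    exact ⟨X.down_closed hs.1 hts, le_trans (Finset.card_le_card hts) hs.2⟩

/-- The subcomplex generated by a family of faces. -/
def generated {V : Type} [DecidableEq V] (F : Finset (Finset V)) : SComplex V where
  faces := F.biUnion Finset.powerset
  down_closed := by
    intro s hs t hts
    simp only [Finset.mem_biUnion, Finset.mem_powerset] at hs ⊢
    obtain ⟨u, hu, hsu⟩ := hs
    exact ⟨u, hu, hts.trans hsu⟩

/-- There is an elementary collapse from `X` to `Y`. -/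
def ElemCollapse {V : Type} [DecidableEq V] (X Y : SComplex V) : Prop :=
  ∃ σ τ : Finset V, σ ∈ X.faces ∧ τ ∈ X.faces ∧ σ ⊂ τ ∧ τ.card = σ.card + 1 ∧
    (∀ ρ ∈ X.faces, σ ⊆ ρ → ρ = σ ∨ ρ = τ) ∧ Y.faces = X.faces \ {σ, τ}

/-- `X` collapses onto dimension `l`. -/
def CollapsesOntoDim {V : Type} [DecidableEq V] (X : SComplex V) (l : ℤ) : Prop :=
  ∃ Y : SComplex V, Relation.ReflTransGen ElemCollapse X Y ∧
    ∀ s ∈ Y.faces, (s.card : ℤ) ≤ l + 1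

/-- Expected number of embeddings of `C` into the lower multiparametric complex. -/
noncomputable def expEmb {W : Type} [Fintype W] [DecidableEq W] (C : SComplex W)
    (α : ℕ → ℝ) (n : ℕ) : ℝ≥0∞ :=
  ∫⁻ ω, (Nat.card {φ : W ↪ Fin n //
      ∀ σ ∈ C.faces, σ.map φ ∈ (lowerComplex n ω).faces} : ℝ≥0∞)
    ∂ selectionMeasure n (lowerP α n)

/-- The cone-plus-full-simplex construction `C'` on vertex set `Option V`: the faces of `C`,
the cones `σ ∪ {v}` over faces `σ` of `C` with the new apex `v = none`, and all subsets of
the old vertex set `V`. -/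
def suspApex {V : Type} [DecidableEq V] [Fintype V] (C : SComplex V) :
    SComplex (Option V) where
  faces := (C.faces.image fun s => insert none (s.image Option.some)).biUnion
      Finset.powerset ∪ ((Finset.univ : Finset V).image Option.some).powerset
  down_closed := by
    intro s hs t hts
    rw [Finset.mem_union] at hs ⊢
    rcases hs with hs | hs
    · left
      simp only [Finset.mem_biUnion, Finset.mem_powerset] at hs ⊢
      obtain ⟨u, hu, hsu⟩ := hs
      exact ⟨u, hu, hts.trans hsu⟩
    · right
      exact Finset.mem_powerset.mpr (hts.trans (Finset.mem_powerset.mp hs))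

theorem exists_eq_map_some_or_eq_insertNone {α : Type*} (t : Finset (Option α)) :
    ∃ s : Finset α, t = s.map .some ∨ t = insertNone s := by
  classical
  refine ⟨eraseNone t, ?_⟩
  rw [map_some_eraseNone, insertNone_eraseNone, eq_comm, erase_eq_self, eq_comm (a := t),
    insert_eq_self]
  exact (em _).symm

theorem mem_faces_of_card_le_one {V : Type} {X : SComplex V} {σ : Finset V}
    (hX : X.faces.Nonempty) (hvert : ∀ w, {w} ∈ X.faces) (hσ : #σ ≤ 1) : σ ∈ X.faces := by
  obtain rfl | hne := σ.eq_empty_or_nonempty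
  · obtain ⟨τ, hτ⟩ := hX
    exact X.down_closed hτ (empty_subset τ)
  · obtain ⟨w, rfl⟩ := card_eq_one.mp (hσ.antisymm hne.card_pos)
    exact hvert w

section Complex

variable {V : Type} [DecidableEq V] {X : SComplex V} {d : ℕ} {σ τ ρ : Finset V}

theorem mem_dimFaces : σ ∈ dimFaces X d ↔ σ ∈ X.faces ∧ #σ = d + 1 :=
  mem_filter

theorem mem_skeleton : σ ∈ (skeleton X d).faces ↔ σ ∈ X.faces ∧ #σ ≤ d + 1 :=
  mem_filter

theorem dimFaces_skeleton_self : dimFaces (skeleton X d) d = dimFaces X d := by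
  ext σ
  simp only [mem_dimFaces, mem_skeleton]
  grind

theorem isPure_skeleton_iff :
    IsPure (skeleton X d) d ↔ ∀ σ ∈ X.faces, #σ ≤ d + 1 → ∃ τ ∈ dimFaces X d, σ ⊆ τ := by
  simp only [IsPure, mem_skeleton, mem_dimFaces]
  grind

theorem stronglyConnected_skeleton_iff :
    StronglyConnected (skeleton X d) d ↔ StronglyConnected X d := by
  have hadj : AdjRel (skeleton X d) d = AdjRel X d := by
    ext σ τ
    simp only [AdjRel, dimFaces_skeleton_self]
  rw [StronglyConnected, StronglyConnected, hadj, dimFaces_skeleton_self]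

instance : Std.Symm (AdjRel X d) where
  symm σ τ h := ⟨h.2.1, h.1, inter_comm σ τ ▸ h.2.2⟩

theorem adjRel_of_subset (hσ : σ ∈ dimFaces X d) (hτ : τ ∈ dimFaces X d) (hρσ : ρ ⊆ σ)
    (hρτ : ρ ⊆ τ) (hρ : d ≤ #ρ) : AdjRel X d σ τ :=
  ⟨hσ, hτ, hρ.trans (card_le_card (subset_inter hρσ hρτ))⟩

theorem stronglyConnected_of_forall_reflTransGen (hτ : τ ∈ dimFaces X d)
    (h : ∀ σ ∈ dimFaces X d, Relation.ReflTransGen (AdjRel X d) σ τ) : StronglyConnected X d :=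
  ⟨⟨τ, hτ⟩, fun σ hσ σ' hσ' => (h σ hσ).trans (symm (h σ' hσ'))⟩

theorem reflTransGen_adjRel_of_forall_subset_union (hσ : #σ = d + 1) (hτ : #τ = d + 1)
    (h : ∀ ρ ⊆ σ ∪ τ, #ρ = d + 1 → ρ ∈ X.faces) :
    Relation.ReflTransGen (AdjRel X d) σ τ := by
  induction hm : #(σ \ τ) generalizing σ with
  | zero =>
    have hsub : σ ⊆ τ := sdiff_eq_empty_iff_subset.mp (card_eq_zero.mp hm)
    rw [eq_of_subset_of_card_le hsub (hτ.trans hσ.symm).le]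
  | succ m ih =>
    obtain ⟨a, ha⟩ : (σ \ τ).Nonempty := card_pos.mp (by omega)
    obtain ⟨b, hb⟩ : (τ \ σ).Nonempty :=
      card_pos.mp (by rw [card_sdiff_comm (hτ.trans hσ.symm)]; omega)
    obtain ⟨haσ, -⟩ := mem_sdiff.mp ha
    obtain ⟨hbτ, hbσ⟩ := mem_sdiff.mp hb
    set σ' := insert b (σ.erase a)
    have hσ'_card : #σ' = d + 1 := by
      rw [card_insert_of_notMem (mt mem_of_mem_erase hbσ), card_erase_add_one haσ, hσ]
    have hσ'_sub : σ' ⊆ σ ∪ τ :=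
      insert_subset (mem_union_right σ hbτ) ((erase_subset a σ).trans subset_union_left)
    have hadj : AdjRel X d σ σ' :=
      adjRel_of_subset (mem_dimFaces.mpr ⟨h σ subset_union_left hσ, hσ⟩)
        (mem_dimFaces.mpr ⟨h σ' hσ'_sub hσ'_card, hσ'_card⟩)
        (erase_subset a σ) (subset_insert b _) (by rw [card_erase_of_mem haσ]; omega)
    have hcloser : #(σ' \ τ) = m := by
      rw [insert_sdiff_of_mem _ hbτ, erase_sdiff_comm, card_erase_of_mem ha, hm,
        Nat.add_sub_cancel]
    exact .head hadj (ih hσ'_card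
      (fun ρ hρ => h ρ (hρ.trans (union_subset hσ'_sub subset_union_right))) hcloser)

end Complex

section Suspension

variable {V : Type} [DecidableEq V] [Fintype V] {C : SComplex V} {d : ℕ} {s t : Finset V}

theorem map_some_mem_suspApex : s.map .some ∈ (suspApex C).faces :=
  mem_union_right _ (mem_powerset.mpr
    (map_eq_image .some s ▸ image_subset_image (subset_univ s)))

theorem insertNone_mem_suspApex_iff : insertNone s ∈ (suspApex C).faces ↔ s ∈ C.faces := by
  have hcone (u : Finset V) : insert none (u.image some) = insertNone u := by
    ext (_ | x) <;> simp
  have hnot : ¬ insertNone s ⊆ univ.image some := fun h => by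
    simpa using h none_mem_insertNone
  simp only [suspApex, hcone, mem_union, mem_biUnion, mem_image, mem_powerset,
    exists_exists_and_eq_and, hnot, or_false, insertNone.le_iff_le]
  exact ⟨fun ⟨u, hu, hsu⟩ => C.down_closed hu hsu, fun hs => ⟨s, hs, le_rfl⟩⟩

theorem map_some_mem_dimFaces_suspApex_iff :
    s.map .some ∈ dimFaces (suspApex C) d ↔ #s = d + 1 := by
  rw [mem_dimFaces, card_map, and_iff_right map_some_mem_suspApex]

theorem insertNone_mem_dimFaces_suspApex_iff :
    insertNone s ∈ dimFaces (suspApex C) (d + 1) ↔ s ∈ dimFaces C d := by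
  rw [mem_dimFaces, mem_dimFaces, insertNone_mem_suspApex_iff, card_insertNone, add_left_inj]

theorem mem_suspApex_of_card_le {k : ℕ} (hC : ∀ s : Finset V, #s ≤ k → s ∈ C.faces)
    {t : Finset (Option V)} (ht : #t ≤ k + 1) : t ∈ (suspApex C).faces := by
  obtain ⟨s, rfl | rfl⟩ := exists_eq_map_some_or_eq_insertNone t
  · exact map_some_mem_suspApex
  · rw [card_insertNone, add_le_add_iff_right] at ht
    exact insertNone_mem_suspApex_iff.mpr (hC s ht)

theorem isPure_skeleton_suspApex (hpure : IsPure C d) (hne : (dimFaces C d).Nonempty) :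
    IsPure (skeleton (suspApex C) (d + 1)) (d + 1) := by
  refine isPure_skeleton_iff.mpr fun ρ hρ hcard => ?_
  obtain ⟨s, rfl | rfl⟩ := exists_eq_map_some_or_eq_insertNone ρ
  · obtain hV | hV := le_or_gt (d + 2) (Fintype.card V)
    · rw [card_map] at hcard
      obtain ⟨u, hsu, hu⟩ := exists_superset_card_eq hcard hV
      exact ⟨u.map .some, map_some_mem_dimFaces_suspApex_iff.mpr hu, map_subset_map.mpr hsu⟩
    · obtain ⟨σ₀, hσ₀⟩ := hne
      have hσ₀_univ : σ₀ = univ :=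
        eq_univ_of_card σ₀ ((card_le_univ σ₀).antisymm (by grind [mem_dimFaces]))
      refine ⟨insertNone σ₀, insertNone_mem_dimFaces_suspApex_iff.mpr hσ₀, ?_⟩
      simp [hσ₀_univ, subset_iff]
  · obtain ⟨u, hu, hsu, hu_card⟩ := hpure s (insertNone_mem_suspApex_iff.mp hρ)
    exact ⟨insertNone u, insertNone_mem_dimFaces_suspApex_iff.mpr (mem_dimFaces.mpr ⟨hu, hu_card⟩),
      insertNone.monotone hsu⟩

theorem adjRel_insertNone (h : AdjRel C d s t) :
    AdjRel (suspApex C) (d + 1) (insertNone s) (insertNone t) :=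
  adjRel_of_subset (insertNone_mem_dimFaces_suspApex_iff.mpr h.1)
    (insertNone_mem_dimFaces_suspApex_iff.mpr h.2.1)
    (insertNone.monotone inter_subset_left) (insertNone.monotone inter_subset_right)
    (by rw [card_insertNone]; exact Nat.succ_le_succ h.2.2)

theorem adjRel_map_some_insertNone (ht : #t = d + 2) (hs : s ∈ dimFaces C d) (hst : s ⊆ t) :
    AdjRel (suspApex C) (d + 1) (t.map .some) (insertNone s) :=
  adjRel_of_subset (ρ := s.map .some) (map_some_mem_dimFaces_suspApex_iff.mpr ht)
    (insertNone_mem_dimFaces_suspApex_iff.mpr hs) (map_subset_map.mpr hst)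
    (fun x hx => by obtain ⟨y, hy, rfl⟩ := mem_map.mp hx; exact some_mem_insertNone.mpr hy)
    (by rw [card_map, (mem_dimFaces.mp hs).2])

theorem reflTransGen_adjRel_map_some (hs : #s = d + 1) (ht : #t = d + 1) :
    Relation.ReflTransGen (AdjRel (suspApex C) d) (s.map .some) (t.map .some) := by
  refine reflTransGen_adjRel_of_forall_subset_union (by rwa [card_map]) (by rwa [card_map])
    fun ρ hρ _ => ?_
  rw [← map_union] at hρ
  exact (suspApex C).down_closed map_some_mem_suspApex hρ

theorem StronglyConnected.suspApex (hC : StronglyConnected C d) :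
    StronglyConnected (suspApex C) (d + 1) := by
  obtain ⟨⟨σ₀, hσ₀⟩, hconn⟩ := hC
  refine stronglyConnected_of_forall_reflTransGen
    (insertNone_mem_dimFaces_suspApex_iff.mpr hσ₀) fun ρ hρ => ?_
  obtain ⟨s, rfl | rfl⟩ := exists_eq_map_some_or_eq_insertNone ρ
  · have hs := map_some_mem_dimFaces_suspApex_iff.mp hρ
    obtain ⟨u, hσ₀u, hu⟩ : ∃ u, σ₀ ⊆ u ∧ #u = d + 2 :=
      exists_superset_card_eq (by grind [mem_dimFaces]) (hs ▸ card_le_univ s)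
    exact (reflTransGen_adjRel_map_some hs hu).tail (adjRel_map_some_insertNone hu hσ₀ hσ₀u)
  · exact (hconn s (insertNone_mem_dimFaces_suspApex_iff.mp hρ) σ₀ hσ₀).lift _
      fun _ _ => adjRel_insertNone

theorem mem_skeleton_suspApex_of_card_le {l : ℕ} (hl : l ≤ d)
    (hC : ∀ s : Finset V, #s ≤ l + 1 → s ∈ C.faces) {t : Finset (Option V)}
    (ht : #t ≤ l + 2) : t ∈ (skeleton (suspApex C) (d + 1)).faces :=
  mem_skeleton.mpr ⟨mem_suspApex_of_card_le hC ht, ht.trans (by omega)⟩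

end Suspension

/-- the truncated suspension `Σ'C = sk_{d+1}(C')` of a pure `d`-dimensional
strongly connected complex `C` (with vertex set all of `V`) is pure `(d+1)`-dimensional and
strongly connected, and it turns a complete `l`-skeleton into a complete `(l+1)`-skeleton;
in particular for `d ≥ 1` it has a complete 1-skeleton. -/
theorem truncated_suspension_properties {V : Type} [DecidableEq V] [Fintype V]
    (C : SComplex V) (d : ℕ) (hvert : ∀ w : V, {w} ∈ C.faces)
    (hpure : IsPure C d) (hsc : StronglyConnected C d) :
    (IsPure (skeleton (suspApex C) (d + 1)) (d + 1) ∧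
      StronglyConnected (skeleton (suspApex C) (d + 1)) (d + 1)) ∧
    (∀ l : ℕ, l ≤ d → (∀ s : Finset V, s.card ≤ l + 1 → s ∈ C.faces) →
      ∀ t : Finset (Option V), t.card ≤ l + 2 →
        t ∈ (skeleton (suspApex C) (d + 1)).faces) ∧
    (1 ≤ d → ∀ t : Finset (Option V), t.card ≤ 2 →
      t ∈ (skeleton (suspApex C) (d + 1)).faces) := by
  have hC : C.faces.Nonempty := hsc.1.mono (filter_subset _ _)
  refine ⟨⟨isPure_skeleton_suspApex hpure hsc.1, ?_⟩, ?_, ?_⟩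
  · exact stronglyConnected_skeleton_iff.mpr hsc.suspApex
  · exact fun l hl hcomplete t ht => mem_skeleton_suspApex_of_card_le hl hcomplete ht
  · exact fun _ t ht => mem_skeleton_suspApex_of_card_le d.zero_le
      (fun s hs => mem_faces_of_card_le_one hC hvert hs) ht
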